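/- arXiv:2109.09239 — 2 statements merged into one kernel-verified Lean document; each statement's English description precedes it below -/
import Mathlib

section
/- Assume Condition (A1). For every K₁ > 0 and every δ ∈ [0,1) there exist constants A₁, α₁, α′₁ > 0, depending only on K₁, δ and the constants C_ξ, H_ξ, α_ξ of (A1), such that for every θ ∈ ℝⁿ and every M ≥ 0: ℙ_θ( ℓ(|Ĩ(K₁)|) ≤ δ·ℓ(|I_*(A₁,θ)|) − M ) ≤ H₀·e^{−α′₁·ℓ(|I_*(A₁,θ)|)}·e^{−α₁·M}. -/
open MeasureTheory Finset
open scoped Classical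

/-- `ell n k = k * log(q*n/k)` with `q = e^2`; equals `0` at `k = 0` by Lean's conventions. -/
noncomputable def ell (n k : ℕ) : ℝ := (k : ℝ) * Real.log (Real.exp 2 * n / k)

/-!
Suppose the selector picks `J` although `I` is the active set. Comparing `J` with `J ∪ I` at the
observation bounds the observed energy on the missed coordinates `I \ J` by the penalty of `I`, by
subadditivity of the penalty. Comparing `I` with `J` at the parameter bounds the energy of `θ` on
`I \ J` from below by `A σ²` times the penalty gap. When `J` has a much smaller penalty than `I` and
`A` is large, the difference has to be noise energy on `I \ J`, which has an exponential tail. A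
union bound over `J` is affordable because the exponent has room for an extra `-pen J`, and
`∑ J, exp (-ell n #J) ≤ ∑ k, exp (-k)`.
-/

section Selection

variable {ι : Type*} [DecidableEq ι] {pen : Finset ι → ℝ}

/-- A penalty on index sets that is subadditive along unions and dominates the cardinality:
the properties of `I ↦ ell n #I` on which the comparison of the two selections rests. -/
structure IsSubadditivePenalty (pen : Finset ι → ℝ) : Prop where
  card_le (I : Finset ι) : (#I : ℝ) ≤ pen I
  union_le (I J : Finset ι) : pen (I ∪ J) ≤ pen I + pen J

lemma IsSubadditivePenalty.nonneg (hpen : IsSubadditivePenalty pen) (I : Finset ι) : 0 ≤ pen I :=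
  (Nat.cast_nonneg _).trans (hpen.card_le I)

variable [Fintype ι] {κ κ' : ℝ} {x θ : ι → ℝ} {I J : Finset ι}

/-- `I` minimizes the penalized residual sum of squares `∑ i ∉ I, y i ^ 2 + κ * pen I`. The
preselector is such a minimizer for the observation, the active set one for the parameter. -/
def IsPenalizedSelection (pen : Finset ι → ℝ) (κ : ℝ) (y : ι → ℝ) (I : Finset ι) : Prop :=
  ∀ J, (∑ i ∈ Iᶜ, y i ^ 2) + κ * pen I ≤ (∑ i ∈ Jᶜ, y i ^ 2) + κ * pen J

lemma sum_compl_union_add_sum_sdiff {N : Type*} [AddCommMonoid N] (f : ι → N) (I J : Finset ι) :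
    ∑ i ∈ (J ∪ I)ᶜ, f i + ∑ i ∈ I \ J, f i = ∑ i ∈ Jᶜ, f i := by
  have hdisj : Disjoint (J ∪ I)ᶜ (I \ J) :=
    disjoint_compl_left.mono_right (sdiff_subset.trans subset_union_right)
  rw [← sum_union hdisj]
  congr 1
  grind [mem_compl]

lemma IsPenalizedSelection.sum_sdiff_sq_le (hJ : IsPenalizedSelection pen κ x J)
    (hpen : IsSubadditivePenalty pen) (hκ : 0 ≤ κ) (I : Finset ι) :
    ∑ i ∈ I \ J, x i ^ 2 ≤ κ * pen I := by
  have hunion := mul_le_mul_of_nonneg_left (hpen.union_le J I) hκ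
  linarith [hJ (J ∪ I), sum_compl_union_add_sum_sdiff (fun i => x i ^ 2) I J]

lemma IsPenalizedSelection.mul_sub_le_sum_sdiff_sq (hI : IsPenalizedSelection pen κ θ I)
    (J : Finset ι) : κ * (pen I - pen J) ≤ ∑ i ∈ I \ J, θ i ^ 2 := by
  have hsub : ∑ i ∈ (J ∪ I)ᶜ, θ i ^ 2 ≤ ∑ i ∈ Iᶜ, θ i ^ 2 :=
    sum_le_sum_of_subset_of_nonneg (compl_subset_compl.2 subset_union_right)
      fun i _ _ => sq_nonneg _
  linarith [hI J, sum_compl_union_add_sum_sdiff (fun i => θ i ^ 2) I J]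

lemma IsPenalizedSelection.mul_sub_le_add_sum_sdiff_sq_sub
    (hJ : IsPenalizedSelection pen κ x J) (hI : IsPenalizedSelection pen κ' θ I)
    (hpen : IsSubadditivePenalty pen) (hκ : 0 ≤ κ) :
    κ' * (pen I - pen J) ≤ 2 * (κ * pen I) + 2 * ∑ i ∈ I \ J, (x i - θ i) ^ 2 := by
  calc κ' * (pen I - pen J)
      ≤ ∑ i ∈ I \ J, θ i ^ 2 := hI.mul_sub_le_sum_sdiff_sq J
    _ ≤ ∑ i ∈ I \ J, (2 * x i ^ 2 + 2 * (x i - θ i) ^ 2) :=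
        sum_le_sum fun i _ => by linarith [sq_nonneg (2 * x i - θ i)]
    _ = 2 * ∑ i ∈ I \ J, x i ^ 2 + 2 * ∑ i ∈ I \ J, (x i - θ i) ^ 2 := by
        rw [sum_add_distrib, mul_sum, mul_sum]
    _ ≤ 2 * (κ * pen I) + 2 * ∑ i ∈ I \ J, (x i - θ i) ^ 2 := by
        gcongr
        exact hJ.sum_sdiff_sq_le hpen hκ I

lemma IsPenalizedSelection.mul_sub_le_add_sum_sdiff_standardized_sq {σ K A : ℝ} (hσ : 0 < σ)
    (hJ : IsPenalizedSelection pen (K * σ ^ 2) x J)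
    (hI : IsPenalizedSelection pen (A * σ ^ 2) θ I)
    (hpen : IsSubadditivePenalty pen) (hK : 0 ≤ K) :
    A * (pen I - pen J) ≤ 2 * (K * pen I) + 2 * ∑ i ∈ I \ J, ((x i - θ i) / σ) ^ 2 := by
  have hscale : σ ^ 2 * ∑ i ∈ I \ J, ((x i - θ i) / σ) ^ 2 = ∑ i ∈ I \ J, (x i - θ i) ^ 2 := by
    rw [mul_sum]
    exact sum_congr rfl fun i _ => by field_simp
  have h := hJ.mul_sub_le_add_sum_sdiff_sq_sub hI hpen (by positivity)
  refine le_of_mul_le_mul_left ?_ (pow_pos hσ 2)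
  linarith

end Selection

section TailBound

variable {ι Ω : Type*} [MeasurableSpace Ω] {μ : Measure Ω}

/-- Condition (A1) for one noise vector `ξ`: the energy of `ξ` on each index set `I` exceeds
`C * #I` by `M` with `μ`-mass at most `H * exp (-α * M)`. -/
def HasExpEnergyTail (μ : Measure Ω) (ξ : Ω → ι → ℝ) (C H α : ℝ) : Prop :=
  ∀ (I : Finset ι) (M : ℝ), 0 ≤ M →
    μ {ω | C * #I + M ≤ ∑ i ∈ I, ξ ω i ^ 2} ≤ ENNReal.ofReal (H * Real.exp (-α * M))

variable [Fintype ι] [DecidableEq ι] {pen : Finset ι → ℝ} {σ C H α K A β δ M : ℝ}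
  {X : Ω → ι → ℝ} {θ : ι → ℝ} {S : Ω → Finset ι} {I J : Finset ι}

/- The threshold on `A` pays for the penalty term (`K`), the typical noise energy (`C`), the rate
`β` and, through the `1` in `β + 1`, the union bound over `J`. -/
lemma IsPenalizedSelection.le_sum_sdiff_standardized_sq {x : ι → ℝ} (hσ : 0 < σ) (hC : 0 ≤ C)
    (hα : 0 < α) (hK : 0 ≤ K) (hβ : 0 ≤ β) (hδ : δ < 1)
    (hA : 2 * ((β + 1) / α + K + C) / (1 - δ) ≤ A) (hpen : IsSubadditivePenalty pen)
    (hJ : IsPenalizedSelection pen (K * σ ^ 2) x J)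
    (hI : IsPenalizedSelection pen (A * σ ^ 2) θ I) (hgap : pen J ≤ δ * pen I - M) :
    C * #(I \ J) + ((β + 1) / α * pen I + A / 2 * M) ≤ ∑ i ∈ I \ J, ((x i - θ i) / σ) ^ 2 := by
  have hδ' : 0 < 1 - δ := sub_pos.2 hδ
  have hA0 : 0 ≤ A := le_trans (by positivity) hA
  have hcard : C * #(I \ J) ≤ C * pen I := by
    gcongr
    exact (Nat.cast_le.2 (card_le_card sdiff_subset)).trans (hpen.card_le I)
  have hconst : 2 * ((β + 1) / α + K + C) * pen I ≤ A * (1 - δ) * pen I :=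
    mul_le_mul_of_nonneg_right ((div_le_iff₀ hδ').1 hA) (hpen.nonneg I)
  have hmul : A * ((1 - δ) * pen I + M) ≤ A * (pen I - pen J) := by
    gcongr
    linarith
  linarith [hJ.mul_sub_le_add_sum_sdiff_standardized_sq hσ hI hpen hK]

lemma HasExpEnergyTail.measure_selection_eq_le (hσ : 0 < σ) (hC : 0 ≤ C) (hH : 0 ≤ H)
    (hα : 0 < α) (hK : 0 ≤ K) (hβ : 0 ≤ β) (hδ : δ < 1)
    (hA : 2 * ((β + 1) / α + K + C) / (1 - δ) ≤ A) (hpen : IsSubadditivePenalty pen)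
    (hξ : HasExpEnergyTail μ (fun ω i => (X ω i - θ i) / σ) C H α)
    (hS : ∀ ω, IsPenalizedSelection pen (K * σ ^ 2) (X ω) (S ω))
    (hI : IsPenalizedSelection pen (A * σ ^ 2) θ I) (hM : 0 ≤ M)
    (hgap : pen J ≤ δ * pen I - M) :
    μ {ω | S ω = J} ≤ ENNReal.ofReal
      (H * Real.exp (-β * pen I) * Real.exp (-(α * A / 2) * M) * Real.exp (-pen J)) := by
  have hpenI : 0 ≤ pen I := hpen.nonneg I
  have hA0 : 0 ≤ A := le_trans (div_nonneg (by positivity) (sub_nonneg.2 hδ.le)) hA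
  have hpenJ : pen J ≤ pen I := by
    linarith [mul_le_of_le_one_left hpenI hδ.le]
  have hexponent : -α * ((β + 1) / α * pen I + A / 2 * M)
      ≤ -β * pen I + -(α * A / 2) * M + -pen J := by
    have hcancel : α * ((β + 1) / α * pen I) = (β + 1) * pen I := by field_simp
    linarith
  calc μ {ω | S ω = J}
      ≤ μ {ω | C * #(I \ J) + ((β + 1) / α * pen I + A / 2 * M)
          ≤ ∑ i ∈ I \ J, ((X ω i - θ i) / σ) ^ 2} := by
        refine measure_mono fun ω (hω : S ω = J) => ?_
        exact (hω ▸ hS ω).le_sum_sdiff_standardized_sq hσ hC hα hK hβ hδ hA hpen hI hgap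
    _ ≤ ENNReal.ofReal (H * Real.exp (-α * ((β + 1) / α * pen I + A / 2 * M))) :=
        hξ _ _ (by positivity)
    _ ≤ ENNReal.ofReal (H * Real.exp (-β * pen I + -(α * A / 2) * M + -pen J)) := by gcongr
    _ = _ := by simp only [Real.exp_add, mul_assoc]

theorem HasExpEnergyTail.measure_penalty_selection_le (hσ : 0 < σ) (hC : 0 ≤ C) (hH : 0 ≤ H)
    (hα : 0 < α) (hK : 0 ≤ K) (hβ : 0 ≤ β) (hδ : δ < 1)
    (hA : 2 * ((β + 1) / α + K + C) / (1 - δ) ≤ A) (hpen : IsSubadditivePenalty pen)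
    (hξ : HasExpEnergyTail μ (fun ω i => (X ω i - θ i) / σ) C H α)
    (hS : ∀ ω, IsPenalizedSelection pen (K * σ ^ 2) (X ω) (S ω))
    (hI : IsPenalizedSelection pen (A * σ ^ 2) θ I) (hM : 0 ≤ M) :
    μ {ω | pen (S ω) ≤ δ * pen I - M} ≤ ENNReal.ofReal
      (H * Real.exp (-β * pen I) * Real.exp (-(α * A / 2) * M) * ∑ J, Real.exp (-pen J)) := by
  set c := H * Real.exp (-β * pen I) * Real.exp (-(α * A / 2) * M)
  calc μ {ω | pen (S ω) ≤ δ * pen I - M}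
      ≤ μ (⋃ J ∈ ({J | pen J ≤ δ * pen I - M} : Finset (Finset ι)), {ω | S ω = J}) :=
        measure_mono fun ω hω => by simpa using hω
    _ ≤ ∑ J with pen J ≤ δ * pen I - M, μ {ω | S ω = J} := measure_biUnion_finset_le _ _
    _ ≤ ∑ J with pen J ≤ δ * pen I - M, ENNReal.ofReal (c * Real.exp (-pen J)) :=
        sum_le_sum fun J hJ => hξ.measure_selection_eq_le hσ hC hH hα hK hβ hδ hA hpen hS hI hM
          (mem_filter.1 hJ).2
    _ ≤ ∑ J, ENNReal.ofReal (c * Real.exp (-pen J)) := sum_le_sum_of_subset (filter_subset _ _)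
    _ = ENNReal.ofReal (c * ∑ J, Real.exp (-pen J)) := by
        rw [mul_sum, ENNReal.ofReal_sum_of_nonneg fun J _ => by positivity]

end TailBound

section Ell

variable {n k : ℕ}

lemma two_le_log_exp_two_mul_div (hk : 0 < k) (hkn : k ≤ n) :
    2 ≤ Real.log (Real.exp 2 * n / k) := by
  have hk' : (0 : ℝ) < k := Nat.cast_pos.2 hk
  have hn' : (0 : ℝ) < n := Nat.cast_pos.2 (hk.trans_le hkn)
  rw [Real.le_log_iff_exp_le (by positivity), le_div_iff₀ hk']
  gcongr

lemma two_mul_le_ell (hkn : k ≤ n) : 2 * (k : ℝ) ≤ ell n k := by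
  rcases Nat.eq_zero_or_pos k with rfl | hk
  · simp [ell]
  rw [ell, mul_comm]
  gcongr
  exact two_le_log_exp_two_mul_div hk hkn

lemma mul_log_le_ell {a c : ℕ} (hac : a ≤ c) (hcn : c ≤ n) :
    (a : ℝ) * Real.log (Real.exp 2 * n / c) ≤ ell n a := by
  rcases Nat.eq_zero_or_pos a with rfl | ha
  · simp [ell]
  have hc' : (0 : ℝ) < c := Nat.cast_pos.2 (ha.trans_le hac)
  have hn' : (0 : ℝ) < n := Nat.cast_pos.2 (ha.trans_le (hac.trans hcn))
  rw [ell]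
  gcongr

lemma ell_le_ell_add_ell {a b c : ℕ} (hac : a ≤ c) (hbc : b ≤ c) (hc : c ≤ a + b) (hcn : c ≤ n) :
    ell n c ≤ ell n a + ell n b := by
  rcases Nat.eq_zero_or_pos c with rfl | hc0
  · simp [ell, Nat.le_zero.1 hac, Nat.le_zero.1 hbc]
  have hlog : 0 ≤ Real.log (Real.exp 2 * n / c) :=
    zero_le_two.trans (two_le_log_exp_two_mul_div hc0 hcn)
  calc ell n c ≤ (a + b) * Real.log (Real.exp 2 * n / c) := by
        rw [ell]
        gcongr
        exact_mod_cast hc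
    _ ≤ ell n a + ell n b := by
        rw [add_mul]
        exact add_le_add (mul_log_le_ell hac hcn) (mul_log_le_ell hbc hcn)

lemma exp_neg_ell (hn : 0 < n) (hk : 0 < k) :
    Real.exp (-ell n k) = (k / (Real.exp 2 * n)) ^ k := by
  rw [ell, ← mul_neg, ← Real.log_inv, inv_div, Real.exp_nat_mul, Real.exp_log (by positivity)]

lemma choose_mul_exp_neg_ell_le (n k : ℕ) :
    (n.choose k : ℝ) * Real.exp (-ell n k) ≤ Real.exp (-1) ^ k := by
  rcases Nat.eq_zero_or_pos k with rfl | hk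
  · simp [ell]
  rcases lt_or_ge n k with hnk | hkn
  · simp [Nat.choose_eq_zero_of_lt hnk, Real.exp_nonneg]
  have hn : 0 < n := hk.trans_le hkn
  calc (n.choose k : ℝ) * Real.exp (-ell n k)
      ≤ (n : ℝ) ^ k / k.factorial * (k / (Real.exp 2 * n)) ^ k := by
        rw [exp_neg_ell hn hk]
        gcongr
        exact Nat.choose_le_pow_div k n
    _ = (k : ℝ) ^ k / k.factorial / Real.exp 2 ^ k := by
        rw [div_pow, mul_pow]
        field_simp
    _ ≤ Real.exp k / Real.exp 2 ^ k := by
        gcongr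
        exact Real.pow_div_factorial_le_exp k k.cast_nonneg k
    _ = Real.exp (-1) ^ k := by
        rw [← Real.exp_nat_mul, ← Real.exp_nat_mul, ← Real.exp_sub]
        ring_nf

variable {ι : Type*} [Fintype ι]

lemma isSubadditivePenalty_ell_card [DecidableEq ι] (hn : Fintype.card ι ≤ n) :
    IsSubadditivePenalty fun I : Finset ι => ell n #I where
  card_le I := by
    linarith [two_mul_le_ell ((card_le_univ I).trans hn), Nat.cast_nonneg (α := ℝ) #I]
  union_le I J := ell_le_ell_add_ell (card_le_card subset_union_left)
    (card_le_card subset_union_right) (card_union_le I J) ((card_le_univ _).trans hn)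

lemma sum_exp_neg_ell_card_le (hn : Fintype.card ι ≤ n) :
    ∑ J : Finset ι, Real.exp (-ell n #J) ≤ (1 - Real.exp (-1))⁻¹ := by
  have hexp : Real.exp (-1) < 1 := Real.exp_lt_one_iff.2 neg_one_lt_zero
  calc ∑ J : Finset ι, Real.exp (-ell n #J)
      = ∑ k ∈ range (Fintype.card ι + 1),
          ((Fintype.card ι).choose k : ℝ) * Real.exp (-ell n k) := by
        rw [← powerset_univ, sum_powerset_apply_card (fun k => Real.exp (-ell n k)), card_univ]
        simp only [nsmul_eq_mul]
    _ ≤ ∑ k ∈ range (Fintype.card ι + 1), Real.exp (-1) ^ k := by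
        refine sum_le_sum fun k _ => le_trans ?_ (choose_mul_exp_neg_ell_le n k)
        gcongr
    _ ≤ ∑' k : ℕ, Real.exp (-1) ^ k :=
        (summable_geometric_of_lt_one (Real.exp_nonneg _) hexp).sum_le_tsum _
          fun k _ => pow_nonneg (Real.exp_nonneg _) k
    _ = (1 - Real.exp (-1))⁻¹ := tsum_geometric_of_lt_one (Real.exp_nonneg _) hexp

end Ell

theorem stmt_2_general {ι Ω : Type*} [Fintype ι] [DecidableEq ι] [MeasurableSpace Ω]
    {μ : Measure Ω} {n : ℕ} {σ C H α K A β δ M : ℝ} {X : Ω → ι → ℝ} {θ : ι → ℝ}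
    {S : Ω → Finset ι} {I : Finset ι} (hn : Fintype.card ι ≤ n) (hσ : 0 < σ) (hC : 0 ≤ C)
    (hH : 0 ≤ H) (hα : 0 < α) (hK : 0 ≤ K) (hβ : 0 ≤ β) (hδ : δ < 1)
    (hA : 2 * ((β + 1) / α + K + C) / (1 - δ) ≤ A)
    (hξ : HasExpEnergyTail μ (fun ω i => (X ω i - θ i) / σ) C H α)
    (hS : ∀ ω, IsPenalizedSelection (fun J => ell n #J) (K * σ ^ 2) (X ω) (S ω))
    (hI : IsPenalizedSelection (fun J => ell n #J) (A * σ ^ 2) θ I) (hM : 0 ≤ M) :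
    μ {ω | ell n #(S ω) ≤ δ * ell n #I - M} ≤ ENNReal.ofReal (H / (1 - Real.exp (-1)) *
      Real.exp (-β * ell n #I) * Real.exp (-(α * A / 2) * M)) := by
  have hselect := hξ.measure_penalty_selection_le hσ hC hH hα hK hβ hδ hA
    (isSubadditivePenalty_ell_card hn) hS hI hM
  refine hselect.trans (ENNReal.ofReal_le_ofReal ?_)
  calc H * Real.exp (-β * ell n #I) * Real.exp (-(α * A / 2) * M)
          * ∑ J : Finset ι, Real.exp (-ell n #J)
      ≤ H * Real.exp (-β * ell n #I) * Real.exp (-(α * A / 2) * M) * (1 - Real.exp (-1))⁻¹ := by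
        gcongr
        exact sum_exp_neg_ell_card_le hn
    _ = _ := by ring

theorem stmt_2 (Cξ Hξ αξ : ℝ) (hCξ : 0 < Cξ) (hHξ : 0 < Hξ) (hαξ : 0 < αξ) (K₁ δ : ℝ) (hK₁ : 0 < K₁) (hδ : 0 ≤ δ) (hδ1 : δ < 1) :
    ∃ A₁ α₁ α₁' : ℝ, 0 < A₁ ∧ 0 < α₁ ∧ 0 < α₁' ∧
      ∀ (n : ℕ) (σ : ℝ), 0 < σ →
        ∀ P : (Fin n → ℝ) → Measure (Fin n → ℝ),
          (∀ θ, IsProbabilityMeasure (P θ)) →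
          (∀ (θ : Fin n → ℝ) (I : Finset (Fin n)) (M : ℝ), 0 ≤ M →
            P θ {x | Cξ * I.card + M ≤ ∑ i ∈ I, ((x i - θ i) / σ) ^ 2}
              ≤ ENNReal.ofReal (Hξ * Real.exp (-αξ * M))) →
          ∀ Itil : (Fin n → ℝ) → Finset (Fin n),
            (∀ (x : Fin n → ℝ) (I : Finset (Fin n)),
              (∑ i ∈ (Itil x)ᶜ, x i ^ 2) + K₁ * σ ^ 2 * ell n (Itil x).card
                ≤ (∑ i ∈ Iᶜ, x i ^ 2) + K₁ * σ ^ 2 * ell n I.card) →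
            ∀ (θ : Fin n → ℝ) (Istar : Finset (Fin n)),
              (∀ I : Finset (Fin n),
                (∑ i ∈ Istarᶜ, θ i ^ 2) + A₁ * σ ^ 2 * ell n Istar.card
                  ≤ (∑ i ∈ Iᶜ, θ i ^ 2) + A₁ * σ ^ 2 * ell n I.card) →
              ∀ M : ℝ, 0 ≤ M →
                P θ {x | ell n (Itil x).card ≤ δ * ell n Istar.card - M}
                  ≤ ENNReal.ofReal (Hξ / (1 - Real.exp (-1)) *
                      Real.exp (-α₁' * ell n Istar.card) * Real.exp (-α₁ * M)) := by
  have hA : 0 < 2 * ((1 + 1) / αξ + K₁ + Cξ) / (1 - δ) :=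
    div_pos (by positivity) (sub_pos.2 hδ1)
  exact ⟨_, _, 1, hA, half_pos (mul_pos hαξ hA), one_pos,
    fun _ _ hσ _ _ hP _ hItil θ _ hIstar _ hM =>
      stmt_2_general (Fintype.card_fin _).le hσ hCξ.le hHξ.le hαξ hK₁.le zero_le_one hδ1 le_rfl
        (hP θ) hItil hIstar hM⟩
end

section
/- Assume Condition (A1) and the standing assumptions. Then there exist constants H₁, α₂ > 0, depending only on the constants of (A1) and of the standing assumptions, such that for every θ ∈ ℝⁿ the false positive rate of the selector satisfies E_θ[ |Î(K)∖I^*| / (n − |I^*|) ] ≤ H₁·(n/(|I^*| ∨ 1))^{−α₂} (with the convention 0/0 := 0 when |I^*| = n). -/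
open MeasureTheory Finset
open scoped Classical

/-- The selector `Î(K)`: empty if the preselector `Ĩ(K)` is empty, otherwise all coordinates
with `X_i² ≥ K σ² log(q n / |Ĩ(K)|)`, where `q = e²`. -/
noncomputable def ihat {n : ℕ} (K σ : ℝ) (Itil : (Fin n → ℝ) → Finset (Fin n))
    (x : Fin n → ℝ) : Finset (Fin n) :=
  if Itil x = ∅ then ∅
  else Finset.univ.filter fun i =>
    K * σ ^ 2 * Real.log (Real.exp 2 * (n : ℝ) / (Itil x).card) ≤ (x i) ^ 2

/-! A selected coordinate `i ∉ I^*` has signal `θ_i² ≤ A₀ σ² L`, `L = log (q n / (|I^*| ∨ 1))`,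
because adding `i` to the minimizer `I^*` cannot lower the criterion, while
`X_i² ≥ K σ² log (q n / |Ĩ|)`. Off the event `|Ĩ| ≥ M₁ |I^*| + L` the last logarithm is at least
`L - log (M₁ + L)`, so `K / 2 > A₀` forces `ξ_i²` to exceed a positive multiple of `L` up to a
constant. Both this noise event and the excluded event have probability `O(exp (-α L))`. -/

section PenalizedMinimizer

variable {ι : Type*} [Fintype ι] [DecidableEq ι]

/-- `J` minimizes the residual `∑_{i ∉ I} r i` plus a penalty on the cardinality of `I`. The active
set `I_*(A, θ)` is the case `r i = θ_i²`, `pen k = A σ² ℓ(k)`; ties are left unresolved. -/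
def IsPenalizedMinimizer (pen : ℕ → ℝ) (r : ι → ℝ) (J : Finset ι) : Prop :=
  ∀ I : Finset ι, (∑ i ∈ Jᶜ, r i) + pen J.card ≤ (∑ i ∈ Iᶜ, r i) + pen I.card

theorem IsPenalizedMinimizer.le_pen_succ_sub {pen : ℕ → ℝ} {r : ι → ℝ} {J : Finset ι}
    (hJ : IsPenalizedMinimizer pen r J) {i : ι} (hi : i ∉ J) :
    r i ≤ pen (J.card + 1) - pen J.card := by
  have hmin := hJ (insert i J)
  rw [card_insert_of_notMem hi, compl_insert] at hmin
  have hsum := add_sum_erase Jᶜ r (mem_compl.mpr hi)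
  linarith

end PenalizedMinimizer

section LogFactor

/-- The logarithmic factor `log (q n / (k ∨ 1))`, `q = e²`, so that `ℓ(k) = k * logFactor n k`.
Replacing `k` by `k ∨ 1` makes it meaningful for an empty active set as well. -/
noncomputable def logFactor (n k : ℕ) : ℝ :=
  Real.log (Real.exp 2 * n / (max k 1 : ℕ))

variable {n k : ℕ}

theorem ell_eq_mul_logFactor (n k : ℕ) : ell n k = k * logFactor n k := by
  rcases k.eq_zero_or_pos with rfl | hk
  · simp [ell]
  · rw [ell, logFactor, max_eq_left hk]

theorem logFactor_antitone (n : ℕ) : Antitone (logFactor n) := by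
  intro j k hjk
  rcases n.eq_zero_or_pos with rfl | hn
  · simp [logFactor]
  · unfold logFactor
    gcongr

theorem logFactor_eq_two_add_log (hn : 0 < n) (k : ℕ) :
    logFactor n k = 2 + Real.log (n / (max k 1 : ℕ)) := by
  rw [logFactor, mul_div_assoc, Real.log_mul (by positivity) (by positivity), Real.log_exp]

theorem two_le_logFactor (hn : 0 < n) (hk : k ≤ n) : 2 ≤ logFactor n k := by
  refine le_trans ?_ (logFactor_antitone n hk)
  rw [logFactor_eq_two_add_log hn, max_eq_left hn, div_self (by positivity), Real.log_one,
    add_zero]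

theorem ell_nonneg (hk : k ≤ n) : 0 ≤ ell n k := by
  rw [ell_eq_mul_logFactor]
  rcases k.eq_zero_or_pos with rfl | hk0
  · simp
  · have := two_le_logFactor (hk0.trans_le hk) hk
    positivity

theorem ell_succ_sub_ell_le (n k : ℕ) : ell n (k + 1) - ell n k ≤ logFactor n k := by
  have hanti := mul_le_mul_of_nonneg_left (logFactor_antitone n k.le_succ)
    (Nat.cast_nonneg (α := ℝ) (k + 1))
  rw [ell_eq_mul_logFactor, ell_eq_mul_logFactor]
  push_cast at hanti ⊢
  linarith

theorem exp_neg_mul_logFactor_le_rpow (hn : 0 < n) (k : ℕ) {α : ℝ} (hα : 0 ≤ α) :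
    Real.exp (-α * logFactor n k) ≤ ((n : ℝ) / (max k 1 : ℕ)) ^ (-α) := by
  rw [Real.rpow_def_of_pos (by positivity), logFactor_eq_two_add_log hn]
  exact Real.exp_le_exp.mpr (by linarith)

theorem logFactor_sub_log_le_log_div {m : ℕ} {M s : ℝ} (hn : 0 < n) (hm : 0 < m) (hM : 0 ≤ M)
    (hs : 0 ≤ s) (hmk : (m : ℝ) ≤ M * k + s) :
    logFactor n k - Real.log (M + s) ≤ Real.log (Real.exp 2 * n / m) := by
  have hm' : (0 : ℝ) < m := by exact_mod_cast hm
  have hκ : (1 : ℝ) ≤ (max k 1 : ℕ) := by exact_mod_cast le_max_right k 1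
  have hkκ : (k : ℝ) ≤ (max k 1 : ℕ) := by exact_mod_cast le_max_left k 1
  have hle : (m : ℝ) ≤ (max k 1 : ℕ) * (M + s) := by nlinarith
  have hMs : 0 < M + s := pos_of_mul_pos_right (hm'.trans_le hle) (by positivity)
  have hlog := Real.log_le_log hm' hle
  rw [Real.log_mul (by positivity) hMs.ne'] at hlog
  rw [logFactor, Real.log_div (by positivity) (by positivity),
    Real.log_div (by positivity) (by positivity)]
  linarith

end LogFactor

theorem log_le_mul_sub_one_sub_log {ε y : ℝ} (hε : 0 < ε) (hy : 0 < y) :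
    Real.log y ≤ ε * y - 1 - Real.log ε := by
  have h := Real.log_le_sub_one_of_pos (mul_pos hε hy)
  rw [Real.log_mul hε.ne' hy.ne'] at h
  linarith

theorem exists_linear_le_mul_sub_log {a b M : ℝ} (hb : 0 ≤ b) (hba : b < a) (hM : 0 ≤ M) :
    ∃ D, ∀ L, 0 < L → (a - b) / 2 * L - D ≤ a * (L - Real.log (M + L)) - b * L := by
  have ha : 0 < a := hb.trans_lt hba
  set ε := (a - b) / (2 * a)
  have hε : 0 < ε := div_pos (sub_pos.mpr hba) (by positivity)
  have haε : a * ε = (a - b) / 2 := by simp only [ε]; field_simp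
  refine ⟨a * (ε * M - 1 - Real.log ε), fun L hL => ?_⟩
  have hlog := mul_le_mul_of_nonneg_left
    (log_le_mul_sub_one_sub_log hε (by positivity : 0 < M + L)) ha.le
  calc (a - b) / 2 * L - a * (ε * M - 1 - Real.log ε)
      = (a - b) * L - a * (ε * (M + L) - 1 - Real.log ε) := by linear_combination L * haε
    _ ≤ (a - b) * L - a * Real.log (M + L) := by gcongr
    _ = a * (L - Real.log (M + L)) - b * L := by ring

theorem half_sub_le_sq_sub_div {a b x t σ : ℝ} (hσ : 0 < σ) (hx : a * σ ^ 2 ≤ x ^ 2)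
    (ht : t ^ 2 ≤ b * σ ^ 2) : a / 2 - b ≤ ((x - t) / σ) ^ 2 := by
  have hsq : x ^ 2 ≤ 2 * ((x - t) ^ 2 + t ^ 2) := by
    simpa only [sub_add_cancel] using add_sq_le (a := x - t) (b := t)
  rw [div_pow, le_div_iff₀ (by positivity)]
  linarith

section Selector

variable {n : ℕ} {K σ : ℝ} {Itil : (Fin n → ℝ) → Finset (Fin n)} {x : Fin n → ℝ} {i : Fin n}

theorem mem_ihat :
    i ∈ ihat K σ Itil x ↔ (Itil x).Nonempty ∧
      K * σ ^ 2 * Real.log (Real.exp 2 * (n : ℝ) / (Itil x).card) ≤ x i ^ 2 := by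
  unfold ihat
  split_ifs with h
  · simp [h]
  · simp [nonempty_iff_ne_empty, h]

theorem noise_sq_ge_of_mem_ihat_sdiff {A M : ℝ} {θ : Fin n → ℝ} {J : Finset (Fin n)} (hσ : 0 < σ)
    (hK : 0 ≤ K) (hA : 0 ≤ A) (hM : 0 ≤ M)
    (hJ : IsPenalizedMinimizer (fun k => A * σ ^ 2 * ell n k) (fun j => θ j ^ 2) J)
    (hx : ((Itil x).card : ℝ) ≤ M * J.card + logFactor n J.card)
    (hi : i ∈ ihat K σ Itil x \ J) :
    K / 2 * (logFactor n J.card - Real.log (M + logFactor n J.card)) - A * logFactor n J.card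
      ≤ ((x i - θ i) / σ) ^ 2 := by
  obtain ⟨hsel, hiJ⟩ := mem_sdiff.mp hi
  obtain ⟨hne, hthreshold⟩ := mem_ihat.mp hsel
  have hL := two_le_logFactor i.pos (card_finset_fin_le J)
  have hlevel := logFactor_sub_log_le_log_div i.pos hne.card_pos hM (by linarith) hx
  have hsignal : θ i ^ 2 ≤ A * logFactor n J.card * σ ^ 2 := by
    have hgain := mul_le_mul_of_nonneg_left (ell_succ_sub_ell_le n J.card)
      (by positivity : 0 ≤ A * σ ^ 2)
    linarith [hJ.le_pen_succ_sub hiJ]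
  set T := Real.log (Real.exp 2 * (n : ℝ) / (Itil x).card)
  calc _ ≤ K / 2 * T - A * logFactor n J.card := by gcongr
    _ = K * T / 2 - A * logFactor n J.card := by ring
    _ ≤ _ := half_sub_le_sq_sub_div hσ (by linarith) hsignal

end Selector

section Measure

variable {Ω ι : Type*} [MeasurableSpace Ω]

theorem measure_le_of_exp_tail (μ : Measure Ω) [IsProbabilityMeasure μ] {f : Ω → ℝ} {C H α : ℝ}
    (hα : 0 ≤ α)
    (htail : ∀ M, 0 ≤ M → μ {x | C + M ≤ f x} ≤ ENNReal.ofReal (H * Real.exp (-α * M))) (t : ℝ) :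
    μ {x | t ≤ f x} ≤ ENNReal.ofReal (max H 1 * Real.exp (-α * (t - C))) := by
  rcases le_total 0 (t - C) with ht | ht
  · refine le_trans (by simpa only [add_sub_cancel] using htail (t - C) ht) ?_
    gcongr
    exact le_max_left H 1
  · refine prob_le_one.trans (ENNReal.one_le_ofReal.mpr ?_)
    exact one_le_mul_of_one_le_of_one_le (le_max_right H 1)
      (Real.one_le_exp (mul_nonneg_of_nonpos_of_nonpos (neg_nonpos.mpr hα) ht))

variable (μ : Measure Ω) {S : Ω → Finset ι} {T : Finset ι}

theorem lintegral_card_le_sum_measure (hST : ∀ x, S x ⊆ T) :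
    ∫⁻ x, (S x).card ∂μ ≤ ∑ i ∈ T, μ {x | i ∈ S x} := by
  -- Measurable hulls have the measure of the possibly nonmeasurable events `i ∈ S x`.
  let hull (i : ι) : Set Ω := toMeasurable μ {x | i ∈ S x}
  have hhull (i : ι) : MeasurableSet (hull i) := measurableSet_toMeasurable μ _
  calc ∫⁻ x, (S x).card ∂μ
      ≤ ∫⁻ x, ∑ i ∈ T, (hull i).indicator 1 x ∂μ := by
        refine lintegral_mono fun x => ?_
        calc ((S x).card : ENNReal) = ∑ i ∈ S x, (hull i).indicator 1 x := by
              rw [card_eq_sum_ones, Nat.cast_sum]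
              refine sum_congr rfl fun i hi => ?_
              rw [Set.indicator_of_mem (subset_toMeasurable μ {x | i ∈ S x} hi), Pi.one_apply,
                Nat.cast_one]
          _ ≤ ∑ i ∈ T, (hull i).indicator 1 x := sum_le_sum_of_subset (hST x)
    _ = ∑ i ∈ T, ∫⁻ x, (hull i).indicator 1 x ∂μ :=
        lintegral_finsetSum T fun i _ => measurable_one.indicator (hhull i)
    _ = ∑ i ∈ T, μ {x | i ∈ S x} := by
        simp only [lintegral_indicator_one (hhull _), hull, measure_toMeasurable]

theorem lintegral_card_div_le (hST : ∀ x, S x ⊆ T) (B : Set Ω) {p : ENNReal}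
    (hp : ∀ i ∈ T, μ {x | x ∉ B ∧ i ∈ S x} ≤ p) :
    ∫⁻ x, ENNReal.ofReal ((S x).card / T.card : ℝ) ∂μ ≤ μ B + p := by
  let good (x : Ω) : Finset ι := if x ∈ B then ∅ else S x
  let c : ENNReal := ENNReal.ofReal (T.card : ℝ)⁻¹
  have hratio (s : Finset ι) : ENNReal.ofReal (s.card / T.card : ℝ) = s.card * c := by
    rw [div_eq_mul_inv, ENNReal.ofReal_mul (by positivity), ENNReal.ofReal_natCast]
  have hT : T.card * c ≤ 1 := by
    rw [← hratio, ENNReal.ofReal_le_one]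
    exact div_self_le_one _
  have mem_good (i : ι) (x : Ω) : i ∈ good x ↔ x ∉ B ∧ i ∈ S x := by
    by_cases hx : x ∈ B <;> simp [good, hx]
  have hgood : ∫⁻ x, (good x).card ∂μ ≤ T.card * p := by
    calc ∫⁻ x, (good x).card ∂μ
        ≤ ∑ i ∈ T, μ {x | i ∈ good x} :=
          lintegral_card_le_sum_measure μ fun x i hi => hST x ((mem_good i x).mp hi).2
      _ ≤ T.card • p := sum_le_card_nsmul T _ p fun i hi => by
          simpa only [mem_good] using hp i hi
      _ = T.card * p := nsmul_eq_mul T.card p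
  have hbound (x : Ω) : ENNReal.ofReal ((S x).card / T.card : ℝ)
      ≤ (toMeasurable μ B).indicator 1 x + (good x).card * c := by
    rw [hratio]
    by_cases hx : x ∈ B
    · rw [Set.indicator_of_mem (subset_toMeasurable μ B hx)]
      have hle : (S x).card * c ≤ T.card * c := by gcongr; exact hST x
      exact (hle.trans hT).trans le_self_add
    · simp only [good, if_neg hx, le_add_self]
  calc ∫⁻ x, ENNReal.ofReal ((S x).card / T.card : ℝ) ∂μ
      ≤ ∫⁻ x, (toMeasurable μ B).indicator 1 x + (good x).card * c ∂μ := lintegral_mono hbound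
    _ = μ B + (∫⁻ x, (good x).card ∂μ) * c := by
        rw [lintegral_add_left (measurable_one.indicator (measurableSet_toMeasurable μ B)),
          lintegral_indicator_one (measurableSet_toMeasurable μ B), measure_toMeasurable,
          lintegral_mul_const' c _ ENNReal.ofReal_ne_top]
    _ ≤ μ B + T.card * p * c := by gcongr
    _ = μ B + T.card * c * p := by rw [mul_right_comm]
    _ ≤ μ B + p := by gcongr; exact mul_le_of_le_one_left' hT

end Measure

theorem lintegral_false_positive_rate_le {n : ℕ} (μ : Measure (Fin n → ℝ)) [IsProbabilityMeasure μ]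
    {σ K A M C H α : ℝ} {θ : Fin n → ℝ} {Itil : (Fin n → ℝ) → Finset (Fin n)}
    {J : Finset (Fin n)} (hσ : 0 < σ) (hK : 0 ≤ K) (hA : 0 ≤ A) (hM : 0 ≤ M) (hα : 0 ≤ α)
    (hnoise : ∀ (i : Fin n) (t : ℝ), 0 ≤ t → μ {x | C + t ≤ ((x i - θ i) / σ) ^ 2}
      ≤ ENNReal.ofReal (H * Real.exp (-α * t)))
    (hJ : IsPenalizedMinimizer (fun k => A * σ ^ 2 * ell n k) (fun i => θ i ^ 2) J) :
    ∫⁻ x, ENNReal.ofReal ((ihat K σ Itil x \ J).card / ((n : ℝ) - J.card)) ∂μ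
      ≤ μ {x | M * J.card + logFactor n J.card ≤ ((Itil x).card : ℝ)}
        + ENNReal.ofReal (max H 1 * Real.exp (-α *
            (K / 2 * (logFactor n J.card - Real.log (M + logFactor n J.card))
              - A * logFactor n J.card - C))) := by
  have hJn := card_finset_fin_le J
  rw [show (n : ℝ) - J.card = (Jᶜ.card : ℕ) by rw [card_compl, Fintype.card_fin, Nat.cast_sub hJn]]
  refine lintegral_card_div_le μ (fun x i hi => mem_compl.mpr (mem_sdiff.mp hi).2) _
    fun i _ => ?_
  exact (measure_mono fun x hx =>
    noise_sq_ge_of_mem_ihat_sdiff hσ hK hA hM hJ (not_le.mp hx.1).le hx.2).trans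
      (measure_le_of_exp_tail μ hα (hnoise i) _)

theorem stmt_4_general {C H α K A M H₀ α₀ : ℝ} (hα : 0 < α) (hA : 0 ≤ A) (hAK : A < K / 2)
    (hM : 0 ≤ M) (hH₀ : 0 ≤ H₀) (hα₀ : 0 < α₀) :
    ∃ H₁ α₂ : ℝ, 0 < H₁ ∧ 0 < α₂ ∧
      ∀ (n : ℕ) (σ : ℝ), 0 < σ →
        ∀ (μ : Measure (Fin n → ℝ)) [IsProbabilityMeasure μ] (θ : Fin n → ℝ),
          (∀ (i : Fin n) (t : ℝ), 0 ≤ t → μ {x | C + t ≤ ((x i - θ i) / σ) ^ 2}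
            ≤ ENNReal.ofReal (H * Real.exp (-α * t))) →
          ∀ (Itil : (Fin n → ℝ) → Finset (Fin n)) (J : Finset (Fin n)),
            IsPenalizedMinimizer (fun k => A * σ ^ 2 * ell n k) (fun i => θ i ^ 2) J →
            (∀ t : ℝ, 0 ≤ t → μ {x | M * J.card + t ≤ ((Itil x).card : ℝ)}
              ≤ ENNReal.ofReal (H₀ * Real.exp (-α₀ * ell n J.card - α₀ * t / 2))) →
            ∫⁻ x, ENNReal.ofReal ((ihat K σ Itil x \ J).card / ((n : ℝ) - J.card)) ∂μ
              ≤ ENNReal.ofReal (H₁ * ((n : ℝ) / (max J.card 1 : ℕ)) ^ (-α₂)) := by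
  obtain ⟨D, hD⟩ := exists_linear_le_mul_sub_log hA hAK hM
  have hc : 0 < (K / 2 - A) / 2 := by linarith
  set c := (K / 2 - A) / 2
  set α₂ := min (α₀ / 2) (α * c)
  have hα₂ : 0 < α₂ := by positivity
  refine ⟨H₀ + max H 1 * Real.exp (α * (D + C)), α₂, by positivity, hα₂, ?_⟩
  intro n σ hσ μ _ θ hnoise Itil J hJ hover
  rcases n.eq_zero_or_pos with rfl | hn
  · simp [eq_empty_of_isEmpty]
  have hJn := card_finset_fin_le J
  have hL := two_le_logFactor hn hJn
  set L := logFactor n J.card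
  have hover_exp : Real.exp (-α₀ * ell n J.card - α₀ * L / 2) ≤ Real.exp (-α₂ * L) := by
    have hα₂L : α₂ * L ≤ α₀ / 2 * L := by gcongr; exact min_le_left _ _
    have hell := mul_nonneg hα₀.le (ell_nonneg hJn)
    exact Real.exp_le_exp.mpr (by linarith)
  have hnoise_exp : Real.exp (-α * (K / 2 * (L - Real.log (M + L)) - A * L - C))
      ≤ Real.exp (α * (D + C)) * Real.exp (-α₂ * L) := by
    have hα₂L : α₂ * L ≤ α * c * L := by gcongr; exact min_le_right _ _
    have hlinear := mul_le_mul_of_nonneg_left (hD L (by linarith)) hα.le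
    rw [← Real.exp_add]
    exact Real.exp_le_exp.mpr (by linarith)
  refine (lintegral_false_positive_rate_le μ hσ (by linarith) hA hM hα.le hnoise hJ).trans
    ((add_le_add_left (hover L (by linarith)) _).trans ?_)
  rw [← ENNReal.ofReal_add (by positivity) (by positivity)]
  refine ENNReal.ofReal_le_ofReal ?_
  calc H₀ * Real.exp (-α₀ * ell n J.card - α₀ * L / 2)
        + max H 1 * Real.exp (-α * (K / 2 * (L - Real.log (M + L)) - A * L - C))
      ≤ H₀ * Real.exp (-α₂ * L)
        + max H 1 * (Real.exp (α * (D + C)) * Real.exp (-α₂ * L)) := by gcongr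
    _ = (H₀ + max H 1 * Real.exp (α * (D + C))) * Real.exp (-α₂ * L) := by ring
    _ ≤ _ := by gcongr; exact exp_neg_mul_logFactor_le_rpow hn _ hα₂.le

theorem stmt_4 (Cξ Hξ αξ : ℝ) (hCξ : 0 < Cξ) (hHξ : 0 < Hξ) (hαξ : 0 < αξ)
    (K A₀ A₁ α₀ α₁' M₁ δ : ℝ)
    (hK : 0 < K) (hA₀ : 0 < A₀) (hA₁ : 0 < A₁) (hα₀ : 0 < α₀) (hα₁' : 0 < α₁')
    (hM₁ : 1 < M₁) (hδ : 0 < δ) (hδ1 : δ < 1) (hA01 : A₀ ≤ A₁)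
    (hKC : A₀ + Cξ < K / 2)
    (hA1big : K / 2 + αξ⁻¹ * ((Cξ * αξ + 2) / 2 + 1) < A₁ / 6) :
    ∃ H₁ α₂ : ℝ, 0 < H₁ ∧ 0 < α₂ ∧
      ∀ (n : ℕ) (σ : ℝ), 0 < σ →
        ∀ P : (Fin n → ℝ) → Measure (Fin n → ℝ),
          (∀ θ, IsProbabilityMeasure (P θ)) →
          (∀ (θ : Fin n → ℝ) (I : Finset (Fin n)) (M : ℝ), 0 ≤ M →
              P θ {x | Cξ * I.card + M ≤ ∑ i ∈ I, ((x i - θ i) / σ) ^ 2}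
                ≤ ENNReal.ofReal (Hξ * Real.exp (-αξ * M))) →
          ∀ Itil : (Fin n → ℝ) → Finset (Fin n),
            (∀ (x : Fin n → ℝ) (I : Finset (Fin n)),
                (∑ i ∈ (Itil x)ᶜ, x i ^ 2) + K * σ ^ 2 * ell n (Itil x).card
                  ≤ (∑ i ∈ Iᶜ, x i ^ 2) + K * σ ^ 2 * ell n I.card) →
            ∀ Istar : ℝ → (Fin n → ℝ) → Finset (Fin n),
              (∀ (A : ℝ) (θ : Fin n → ℝ), 0 < A → ∀ I : Finset (Fin n),
                  (∑ i ∈ (Istar A θ)ᶜ, θ i ^ 2) + A * σ ^ 2 * ell n (Istar A θ).card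
                    ≤ (∑ i ∈ Iᶜ, θ i ^ 2) + A * σ ^ 2 * ell n I.card) →
              (∀ (θ : Fin n → ℝ) (M : ℝ), 0 ≤ M →
                  P θ {x | M₁ * (Istar A₀ θ).card + M ≤ ((Itil x).card : ℝ)}
                    ≤ ENNReal.ofReal (Hξ / (1 - Real.exp (-1)) *
                        Real.exp (-α₀ * ell n (Istar A₀ θ).card - α₀ * M / 2))) →
              (∀ θ : Fin n → ℝ,
                  P θ {x | ((Itil x).card : ℝ) ≤ δ * (Istar A₁ θ).card}
                    ≤ ENNReal.ofReal (Hξ / (1 - Real.exp (-1)) *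
                        Real.exp (-α₁' * ell n (Istar A₁ θ).card))) →
              ∀ θ : Fin n → ℝ,
                (∫⁻ x, ENNReal.ofReal
                    (((ihat K σ Itil x \ Istar A₀ θ).card : ℝ) /
                      ((n : ℝ) - (Istar A₀ θ).card)) ∂(P θ))
                  ≤ ENNReal.ofReal
                      (H₁ * ((n : ℝ) / (↑(max (Istar A₀ θ).card 1))) ^ (-α₂)) := by
  obtain ⟨H₁, α₂, hH₁, hα₂, hrate⟩ := stmt_4_general (C := Cξ) (H := Hξ) (M := M₁)
    (H₀ := Hξ / (1 - Real.exp (-1))) hαξ hA₀.le (by linarith : A₀ < K / 2) (by linarith)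
    (div_nonneg hHξ.le (by simp)) hα₀
  exact ⟨H₁, α₂, hH₁, hα₂, fun n σ hσ P _ hnoise Itil _ Istar hmin hover _ θ =>
    hrate n σ hσ (P θ) θ (fun i => by simpa using hnoise θ {i}) Itil (Istar A₀ θ) (hmin A₀ θ hA₀)
      (hover θ)⟩
end
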